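/- (Main technical lemma) For any graph F with maximum degree at least two, there exist constants ε ∈ (0,1/2] and δ = δ(F) ∈ (0,1/2] such that for all n ≥ 1 and 0 < p ≤ ε·n^{-1/m_2(F)}: if H is a collection of graphs on vertex set [n] with Σ_{H ∈ H} exp(-δ·e(H)·p) ≤ 1/2, then there exists an F-free graph G on vertex set [n] sharing at least one edge with every H ∈ H. -/

import Mathlib

/-!
The graph `G` is obtained from a binomial random graph with edge density `p` by deleting the edges
of a maximal edge-disjoint family `M` of copies of `J`, where `J ⊆ F` attains the maximum in the
definition of `m₂(F)`. By maximality what remains is `J`-free, hence `F`-free.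

If what remains misses `H`, then every random edge inside `H` lies in some member of `M` that meets
`H`. So there is an edge-disjoint family `M` of copies of `J` meeting `H`, all contained in the
random edge set `S`, with `|S ∩ H| ≤ r |M|`, where `r = e(J)`. The indicator of this event is at
most `∑_M 1[⋃ M ⊆ S] 2 ^ (r |M| - |S ∩ H|)`. Taking expectations (`sum_weight_le`), this single
exponential moment handles both the lower tail of `|S ∩ H|` and the upper tail of `|M|`: the
probability is at most `(1 - p/2) ^ e(H) * (1 + (4p) ^ r) ^ N`, with `N` the number of copies of
`J` that meet `H` (`sum_families_le`). Since `N = O(e(H) n ^ (v_J - 2))` (`card_copies_le`) and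
`n ^ (v_J - 2) p ^ (r - 1) ≤ ε ^ (r - 1)` by the choice of `J`, for small `ε` this is at most
`exp (-e(H) p / 4)`, and a union bound over `H` finishes the proof. The probabilistic part uses
only the edge sets and is carried out for an arbitrary uniform hypergraph (`exists_hitting_set`).
-/

open scoped Classical
open Finset

/-- The 2-density `m₂(F) = max_{J ⊆ F, v_J ≥ 3} (e_J - 1)/(v_J - 2)` of a graph. -/
noncomputable def m2Dens {V : Type*} [Fintype V] (F : SimpleGraph V) : ℝ :=
  sSup {x : ℝ | ∃ J : F.Subgraph, 3 ≤ J.verts.ncard ∧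
    x = ((J.edgeSet.ncard : ℝ) - 1) / ((J.verts.ncard : ℝ) - 2)}

/-- `G` is `F`-free: there is no embedding of `F` into `G` mapping edges to edges. -/
def FFree {V W : Type*} (F : SimpleGraph V) (G : SimpleGraph W) : Prop :=
  ¬ ∃ f : V ↪ W, ∀ a b, F.Adj a b → G.Adj (f a) (f b)

/-! ### Independent hitting sets in uniform hypergraphs -/

/-- Every set `S` has a subset containing no member of `C`, obtained by removing a maximal disjoint
family; if it misses `H`, the members of that family that meet `H` cover `S ∩ H`. -/
lemma exists_deletion {E : Type*} [Fintype E] [DecidableEq E] (C : Finset (Finset E))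
    (r : ℕ) (hr : 1 ≤ r) (hC : ∀ T ∈ C, T.card = r) (S : Finset E) :
    ∃ S' ⊆ S, (∀ T ∈ C, ¬ T ⊆ S') ∧ ∀ H : Finset E, ¬ (S' ∩ H).Nonempty →
      ∃ M ⊆ C.filter (fun T => (T ∩ H).Nonempty),
        (M : Set (Finset E)).PairwiseDisjoint id ∧ M.biUnion id ⊆ S ∧
          (S ∩ H).card ≤ r * M.card := by
  obtain ⟨M, hM, hmax⟩ := Finset.exists_max_image
    (C.powerset.filter (fun M : Finset (Finset E) =>
      (M : Set (Finset E)).PairwiseDisjoint id ∧ M.biUnion id ⊆ S))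
    Finset.card ⟨∅, by simp⟩
  simp only [mem_filter, mem_powerset] at hM hmax
  obtain ⟨hMC, hMd, hMS⟩ := hM
  refine ⟨S \ M.biUnion id, sdiff_subset, ?_, ?_⟩
  · intro T hT hTS
    have hdis : Disjoint T (M.biUnion id) := by
      rw [Finset.disjoint_left]
      intro x hx
      exact (mem_sdiff.1 (hTS hx)).2
    have hTM : T ∉ M := by
      intro h
      have h1 : T ⊆ M.biUnion id := Finset.subset_biUnion_of_mem id h
      have h2 : T = ∅ := by simpa using hdis.mono_right h1
      have := hC T hT
      simp [h2] at this
      omega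
    have := hmax (insert T M) ⟨insert_subset hT hMC, ?_, ?_⟩
    · rw [card_insert_of_notMem hTM] at this
      omega
    · rw [coe_insert]
      refine hMd.insert fun U hU _ => ?_
      exact hdis.mono_right (Finset.subset_biUnion_of_mem id hU)
    · rw [biUnion_insert]
      exact union_subset (hTS.trans sdiff_subset) hMS
  · intro H hH
    refine ⟨M.filter (fun T => (T ∩ H).Nonempty), filter_subset_filter _ hMC, ?_, ?_, ?_⟩
    · exact hMd.subset (coe_subset.2 (filter_subset _ _))
    · exact (biUnion_subset_biUnion_of_subset_left _ (filter_subset _ _)).trans hMS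
    · have hsub : S ∩ H ⊆ (M.filter (fun T => (T ∩ H).Nonempty)).biUnion id := by
        intro x hx
        rw [mem_inter] at hx
        by_contra hcon
        apply hH
        refine ⟨x, mem_inter.2 ⟨mem_sdiff.2 ⟨hx.1, fun hxM => hcon ?_⟩, hx.2⟩⟩
        obtain ⟨T, hT, hxT⟩ := mem_biUnion.1 hxM
        exact mem_biUnion.2 ⟨T, mem_filter.2 ⟨hT, x, mem_inter.2 ⟨hxT, hx.2⟩⟩, hxT⟩
      refine (card_le_card hsub).trans (card_biUnion_le.trans ?_)
      rw [mul_comm]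
      refine Finset.sum_le_card_nsmul _ _ r fun T hT => ?_
      exact (hC T (hMC (mem_filter.1 hT).1)).le

/-- For a `p`-random set `S`, the left side is `𝔼[1[U ⊆ S] 2 ^ (-|S ∩ H|)]`. -/
lemma sum_weight_le {E : Type*} [Fintype E] [DecidableEq E] (p : ℝ) (hp0 : 0 ≤ p) (hp1 : p ≤ 1)
    (U H : Finset E) :
    ∑ S : Finset E, (if U ⊆ S then
      p ^ S.card * (1 - p) ^ (univ \ S).card * (1 / 2 : ℝ) ^ (S ∩ H).card else 0)
      ≤ (2 * p) ^ U.card * (1 - p / 2) ^ H.card := by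
  have key := Finset.prod_add (fun e : E => p * (if e ∈ H then (1 / 2 : ℝ) else 1))
    (fun e : E => if e ∈ U then 0 else 1 - p) univ
  have e1 : ∀ S : Finset E, (if U ⊆ S then
      p ^ S.card * (1 - p) ^ (univ \ S).card * (1 / 2 : ℝ) ^ (S ∩ H).card else 0)
      = (∏ e ∈ S, (p * (if e ∈ H then (1 / 2 : ℝ) else 1))) *
        ∏ e ∈ univ \ S, (if e ∈ U then 0 else 1 - p) := by
    intro S
    rw [prod_mul_distrib, prod_const, prod_ite_mem, prod_const]
    split_ifs with h
    · have : ∏ e ∈ univ \ S, (if e ∈ U then 0 else 1 - p) = (1 - p) ^ (univ \ S).card := by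
        rw [← prod_const]
        refine prod_congr rfl fun e he => ?_
        rw [if_neg]
        intro heU
        exact (mem_sdiff.1 he).2 (h heU)
      rw [this]
      ring
    · obtain ⟨e, heU, heS⟩ := not_subset.1 h
      rw [prod_eq_zero (i := e) (by simp [heS]) (by simp [heU]), mul_zero]
  rw [sum_congr rfl (fun S _ => e1 S)]
  rw [powerset_univ] at key
  rw [← key]
  have e2 : (2 * p) ^ U.card * (1 - p / 2) ^ H.card
      = ∏ e : E, ((if e ∈ U then 2 * p else 1) * (if e ∈ H then 1 - p / 2 else 1)) := by
    rw [prod_mul_distrib, prod_ite_mem, prod_ite_mem]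
    simp
  rw [e2]
  refine prod_le_prod (fun e _ => ?_) (fun e _ => ?_)
  · split_ifs <;> linarith
  · split_ifs <;> nlinarith

/-- The bound `exp (-|H| p / 4)` for the expectation of
`∑ 2 ^ (r |M|) 1[⋃ M ⊆ S] 2 ^ (-|S ∩ H|)`, where the sum runs over disjoint subfamilies `M` of a
small family `D` of `r`-sets, and `S` is `p`-random. -/
lemma sum_families_le {E : Type*} [Fintype E] [DecidableEq E] (D : Finset (Finset E))
    (r : ℕ) (hD : ∀ T ∈ D, T.card = r) (p : ℝ) (hp0 : 0 ≤ p) (hp1 : p ≤ 1)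
    (H : Finset E) (hN : (D.card : ℝ) * (4 * p) ^ r ≤ H.card * p / 4) :
    ∑ M ∈ D.powerset.filter (fun M : Finset (Finset E) => (M : Set (Finset E)).PairwiseDisjoint id),
      ∑ S : Finset E, (2 : ℝ) ^ (r * M.card) * (if M.biUnion id ⊆ S then
        p ^ S.card * (1 - p) ^ (univ \ S).card * (1 / 2 : ℝ) ^ (S ∩ H).card else 0)
      ≤ Real.exp (-(1 / 4 * (H.card : ℝ) * p)) := by
  have h0 : (0 : ℝ) ≤ 1 - p / 2 := by linarith
  have step : ∀ M ∈ D.powerset.filter (fun M : Finset (Finset E) => (M : Set (Finset E)).PairwiseDisjoint id),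
      ∑ S : Finset E, (2 : ℝ) ^ (r * M.card) * (if M.biUnion id ⊆ S then
        p ^ S.card * (1 - p) ^ (univ \ S).card * (1 / 2 : ℝ) ^ (S ∩ H).card else 0)
      ≤ ((4 * p) ^ r) ^ M.card * (1 - p / 2) ^ H.card := by
    intro M hM
    obtain ⟨hMD, hMd⟩ := mem_filter.1 hM
    rw [mem_powerset] at hMD
    have hcard : (M.biUnion id).card = r * M.card := by
      rw [card_biUnion (fun x hx y hy hxy => hMd hx hy hxy),
        sum_const_nat (m := r) (f := fun T => (id T).card) (fun T hT => hD T (hMD hT)), mul_comm]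
    rw [← mul_sum]
    refine (mul_le_mul_of_nonneg_left (sum_weight_le p hp0 hp1 _ H) (by positivity)).trans
      (le_of_eq ?_)
    rw [hcard, ← mul_assoc, ← mul_pow, ← pow_mul]
    congr 2
    ring
  refine (sum_le_sum step).trans ?_
  -- Dropping disjointness turns the sum over families into a binomial expansion.
  refine (sum_le_sum_of_subset_of_nonneg (filter_subset _ _)
    (fun M _ _ => by positivity)).trans ?_
  rw [← sum_mul]
  have hbin : ∑ M ∈ D.powerset, ((4 * p) ^ r) ^ M.card = (1 + (4 * p) ^ r) ^ D.card := by
    have := Finset.prod_one_add (f := fun _ : Finset E => (4 * p) ^ r) D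
    simpa using this.symm
  rw [hbin]
  have h1 : (1 + (4 * p) ^ r) ^ D.card ≤ Real.exp (H.card * p / 4) := by
    calc (1 + (4 * p) ^ r) ^ D.card ≤ (Real.exp ((4 * p) ^ r)) ^ D.card := by
          refine pow_le_pow_left₀ (by positivity) ?_ _
          linarith [Real.add_one_le_exp ((4 * p) ^ r)]
      _ = Real.exp (D.card * (4 * p) ^ r) := by rw [← Real.exp_nat_mul]
      _ ≤ _ := Real.exp_le_exp.2 hN
  have h2 : (1 - p / 2) ^ H.card ≤ Real.exp (-(H.card * p / 2)) := by
    calc (1 - p / 2) ^ H.card ≤ (Real.exp (-(p / 2))) ^ H.card :=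
          pow_le_pow_left₀ h0 (Real.one_sub_le_exp_neg _) _
      _ = _ := by rw [← Real.exp_nat_mul]; congr 1; ring
  refine (mul_le_mul h1 h2 (by positivity) (Real.exp_pos _).le).trans (le_of_eq ?_)
  rw [← Real.exp_add]
  congr 1
  ring

/-- Hypergraph form of the theorem: if each `H` meets few members of the `r`-uniform hypergraph
`C`, some set independent in `C` meets every `H`. -/
lemma exists_hitting_set {E : Type*} [Fintype E] [DecidableEq E] (C : Finset (Finset E))
    (r : ℕ) (hr : 1 ≤ r) (hC : ∀ T ∈ C, T.card = r) (p : ℝ) (hp0 : 0 ≤ p) (hp1 : p ≤ 1)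
    (𝓗 : Finset (Finset E))
    (hN : ∀ H ∈ 𝓗, ((C.filter (fun T => (T ∩ H).Nonempty)).card : ℝ) * (4 * p) ^ r
      ≤ H.card * p / 4)
    (hsum : ∑ H ∈ 𝓗, Real.exp (-(1 / 4 * (H.card : ℝ) * p)) < 1) :
    ∃ S : Finset E, (∀ T ∈ C, ¬ T ⊆ S) ∧ ∀ H ∈ 𝓗, (S ∩ H).Nonempty := by
  by_contra! hcon
  let Q : Finset E → Finset (Finset (Finset E)) := fun H =>
    (C.filter (fun T => (T ∩ H).Nonempty)).powerset.filter
      (fun M : Finset (Finset E) => (M : Set (Finset E)).PairwiseDisjoint id)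
  let f : Finset E → Finset (Finset E) → Finset E → ℝ := fun H M S =>
    (2 : ℝ) ^ (r * M.card) * (if M.biUnion id ⊆ S then
        p ^ S.card * (1 - p) ^ (univ \ S).card * (1 / 2 : ℝ) ^ (S ∩ H).card else 0)
  have h1p : 0 ≤ 1 - p := by linarith
  have hf : ∀ H M S, 0 ≤ f H M S := by
    intro H M S
    simp only [f]
    split_ifs <;> positivity
  have hw : ∀ S : Finset E, p ^ S.card * (1 - p) ^ (univ \ S).card
      ≤ ∑ H ∈ 𝓗, ∑ M ∈ Q H, f H M S := by
    intro S
    obtain ⟨S', -, hfree, hbad⟩ := exists_deletion C r hr hC S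
    obtain ⟨H, hH, hHe⟩ := hcon S' hfree
    obtain ⟨M, hMC, hMd, hMS, hcard⟩ := hbad H (by simp [hHe])
    refine le_trans ?_ (single_le_sum (f := fun H => ∑ M ∈ Q H, f H M S)
      (fun H _ => sum_nonneg fun M _ => hf H M S) hH)
    refine le_trans ?_ (single_le_sum (f := fun M => f H M S) (fun M _ => hf H M S)
      (mem_filter.2 ⟨mem_powerset.2 hMC, hMd⟩))
    simp only [f, if_pos hMS]
    have hge : (1 : ℝ) ≤ 2 ^ (r * M.card) * (1 / 2 : ℝ) ^ (S ∩ H).card := by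
      calc (1 : ℝ) = 2 ^ (S ∩ H).card * (1 / 2 : ℝ) ^ (S ∩ H).card := by
            rw [← mul_pow]; norm_num
        _ ≤ _ := by
            gcongr
            norm_num
    have hw0 : 0 ≤ p ^ S.card * (1 - p) ^ (univ \ S).card := by positivity
    calc p ^ S.card * (1 - p) ^ (univ \ S).card
        ≤ (p ^ S.card * (1 - p) ^ (univ \ S).card) *
          (2 ^ (r * M.card) * (1 / 2 : ℝ) ^ (S ∩ H).card) := le_mul_of_one_le_right hw0 hge
      _ = _ := by ring
  have htot : ∑ S : Finset E, p ^ S.card * (1 - p) ^ (univ \ S).card = 1 := by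
    have := Finset.prod_add (fun _ : E => p) (fun _ => 1 - p) univ
    simp only [prod_const, powerset_univ] at this
    rw [← this]
    simp
  have : (1 : ℝ) ≤ ∑ H ∈ 𝓗, Real.exp (-(1 / 4 * (H.card : ℝ) * p)) := by
    calc (1 : ℝ) ≤ ∑ S : Finset E, ∑ H ∈ 𝓗, ∑ M ∈ Q H, f H M S :=
          htot.symm.le.trans (sum_le_sum fun S _ => hw S)
      _ = ∑ H ∈ 𝓗, ∑ M ∈ Q H, ∑ S : Finset E, f H M S := by
          rw [sum_comm]
          exact sum_congr rfl fun H _ => sum_comm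
      _ ≤ _ := sum_le_sum fun H hH => sum_families_le _ r
          (fun T hT => hC T (mem_filter.1 hT).1) p hp0 hp1 H (hN H hH)
  linarith

/-! ### Counting copies of a graph -/

/-- The edge sets of all copies of `J` in the complete graph on `Fin n`. -/
noncomputable def copies {W : Type*} [Fintype W] (J : SimpleGraph W) (n : ℕ) :
    Finset (Finset (Sym2 (Fin n))) :=
  univ.image (fun f : W ↪ Fin n => J.edgeFinset.image (Sym2.map f))

lemma card_of_mem_copies {W : Type*} [Fintype W] (J : SimpleGraph W) (n : ℕ)
    (T : Finset (Sym2 (Fin n))) (hT : T ∈ copies J n) : T.card = J.edgeFinset.card := by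
  obtain ⟨f, -, rfl⟩ := mem_image.1 hT
  exact card_image_of_injective _ (Sym2.map.injective f.injective)

/-- An embedding sending the pair `a, b` to an edge of `H` is determined by the image of that pair,
one of `2 e(H)` darts, and its values on the other `v - 2` vertices. -/
lemma card_embeddings_le {W : Type*} [Fintype W] (n : ℕ) (H : SimpleGraph (Fin n))
    (a b : W) (hab : a ≠ b) :
    (univ.filter (fun f : W ↪ Fin n => H.Adj (f a) (f b))).card
      ≤ 2 * H.edgeFinset.card * n ^ (Fintype.card W - 2) := by
  let R := {w : W // w ∉ ({a, b} : Finset W)}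
  have hR : Fintype.card R = Fintype.card W - 2 := by
    rw [Fintype.card_subtype_compl, Fintype.card_coe, card_pair hab]
  let φ : {f : W ↪ Fin n // H.Adj (f a) (f b)} → H.Dart × (R → Fin n) :=
    fun f => (⟨(f.1 a, f.1 b), f.2⟩, fun w => f.1 w.1)
  have hφ : Function.Injective φ := by
    rintro ⟨f, hf⟩ ⟨g, hg⟩ h
    simp only [φ, Prod.mk.injEq, SimpleGraph.Dart.mk.injEq] at h
    obtain ⟨⟨ha, hb⟩, hr⟩ := h
    ext w
    by_cases hw : w ∈ ({a, b} : Finset W)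
    · simp only [mem_insert, mem_singleton] at hw
      rcases hw with rfl | rfl
      · simp [ha]
      · simp [hb]
    · have := congrFun hr ⟨w, hw⟩
      simp only at this
      simp [this]
  have := Fintype.card_le_of_injective φ hφ
  rw [Fintype.card_prod, Fintype.card_fun, hR, Fintype.card_fin,
    SimpleGraph.dart_card_eq_twice_card_edges, Fintype.card_subtype] at this
  exact this

lemma card_copies_le {W : Type*} [Fintype W] (J : SimpleGraph W) (n : ℕ)
    (H : SimpleGraph (Fin n)) :
    ((copies J n).filter (fun T => (T ∩ H.edgeFinset).Nonempty)).card
      ≤ Fintype.card W ^ 2 * (2 * H.edgeFinset.card * n ^ (Fintype.card W - 2)) := by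
  let P : Finset (W × W) := univ.filter (fun q => q.1 ≠ q.2)
  have hsub : (copies J n).filter (fun T => (T ∩ H.edgeFinset).Nonempty) ⊆
      (P.biUnion (fun q => univ.filter (fun f : W ↪ Fin n => H.Adj (f q.1) (f q.2)))).image
        (fun f : W ↪ Fin n => J.edgeFinset.image (Sym2.map f)) := by
    intro T hT
    obtain ⟨hT, e, he⟩ := mem_filter.1 hT
    obtain ⟨f, -, rfl⟩ := mem_image.1 hT
    obtain ⟨he1, he2⟩ := mem_inter.1 he
    obtain ⟨e', he', rfl⟩ := mem_image.1 he1
    refine mem_image.2 ⟨f, ?_, rfl⟩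
    induction e' using Sym2.ind with
    | _ a b =>
      rw [SimpleGraph.mem_edgeFinset, SimpleGraph.mem_edgeSet] at he'
      rw [Sym2.map_mk, SimpleGraph.mem_edgeFinset, SimpleGraph.mem_edgeSet] at he2
      exact mem_biUnion.2 ⟨(a, b), by simpa [P] using he'.ne, by simpa using he2⟩
  refine (card_le_card hsub).trans (card_image_le.trans (card_biUnion_le.trans ?_))
  refine (sum_le_card_nsmul _ _ _ fun q hq =>
    card_embeddings_le n H q.1 q.2 (mem_filter.1 hq).2).trans ?_
  rw [smul_eq_mul]
  refine Nat.mul_le_mul_right _ ?_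
  refine (card_le_univ P).trans (le_of_eq ?_)
  rw [Fintype.card_prod, sq]

/-- The main statement for a graph `J`, with the bound on `p` in the form
`n ^ (v - 2) p ^ (e - 1) ≤ η`. -/
lemma exists_free_graph {W : Type*} [Fintype W] (J : SimpleGraph W)
    (he : 1 ≤ J.edgeSet.ncard) (n : ℕ) (p : ℝ) (hp0 : 0 < p) (hp1 : p ≤ 1)
    (η : ℝ) (hη : 8 * (Fintype.card W : ℝ) ^ 2 * 4 ^ J.edgeSet.ncard * η ≤ 1)
    (hpn : (n : ℝ) ^ (Fintype.card W - 2) * p ^ (J.edgeSet.ncard - 1) ≤ η)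
    (𝓗 : Finset (SimpleGraph (Fin n)))
    (hsum : (∑ H ∈ 𝓗, Real.exp (-(1 / 4 * (H.edgeFinset.card : ℝ) * p))) ≤ 1 / 2) :
    ∃ G : SimpleGraph (Fin n), FFree J G ∧
      ∀ H ∈ 𝓗, (G.edgeFinset ∩ H.edgeFinset).Nonempty := by
  rw [← SimpleGraph.coe_edgeFinset, Set.ncard_coe_finset] at he hη hpn
  have hN : ∀ H ∈ 𝓗.image (fun H => H.edgeFinset),
      (((copies J n).filter (fun T => (T ∩ H).Nonempty)).card : ℝ) * (4 * p) ^ J.edgeFinset.card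
        ≤ H.card * p / 4 := by
    intro H' hH'
    obtain ⟨H, hH, rfl⟩ := mem_image.1 hH'
    have hc : (((copies J n).filter (fun T => (T ∩ H.edgeFinset).Nonempty)).card : ℝ)
      ≤ (Fintype.card W : ℝ) ^ 2 *
        (2 * H.edgeFinset.card * (n : ℝ) ^ (Fintype.card W - 2)) := by
      exact_mod_cast card_copies_le J n H
    set h : ℝ := (H.edgeFinset.card : ℝ)
    set v : ℝ := (Fintype.card W : ℝ)
    obtain ⟨k, hk⟩ : ∃ k, J.edgeFinset.card = k + 1 := ⟨_, (Nat.sub_add_cancel he).symm⟩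
    rw [hk] at hpn hη ⊢
    rw [Nat.add_sub_cancel] at hpn
    have hh : 0 ≤ h := Nat.cast_nonneg _
    calc _ ≤ (v ^ 2 * (2 * h * (n : ℝ) ^ (Fintype.card W - 2))) * (4 * p) ^ (k + 1) := by
          gcongr
      _ = (2 * v ^ 2 * 4 ^ (k + 1) * (h * p)) * ((n : ℝ) ^ (Fintype.card W - 2) * p ^ k) := by
          rw [mul_pow, pow_succ p]; ring
      _ ≤ (2 * v ^ 2 * 4 ^ (k + 1) * (h * p)) * η := by gcongr
      _ = (8 * v ^ 2 * 4 ^ (k + 1) * η) * (h * p / 4) := by ring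
      _ ≤ 1 * (h * p / 4) := by gcongr
      _ = _ := one_mul _
  have hlt : ∑ H ∈ 𝓗.image (fun H => H.edgeFinset),
      Real.exp (-(1 / 4 * (H.card : ℝ) * p)) < 1 := by
    rw [sum_image]
    · linarith
    · intro H₁ _ H₂ _ h
      exact SimpleGraph.edgeFinset_inj.1 h
  obtain ⟨S, hS, hSH⟩ := exists_hitting_set (copies J n) J.edgeFinset.card he
    (card_of_mem_copies J n) p hp0.le hp1 _ hN hlt
  -- `G` is kept opaque so that its edge set gets the same `Fintype` instance as in the goal.
  obtain ⟨G, hG⟩ : ∃ G, G = SimpleGraph.fromEdgeSet (S : Set (Sym2 (Fin n))) := ⟨_, rfl⟩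
  refine ⟨G, ?_, ?_⟩
  · rintro ⟨f, hf⟩
    refine hS _ (mem_image.2 ⟨f, mem_univ _, rfl⟩) ?_
    intro e he
    obtain ⟨e', he', rfl⟩ := mem_image.1 he
    induction e' using Sym2.ind with
    | _ a b =>
      rw [SimpleGraph.mem_edgeFinset, SimpleGraph.mem_edgeSet] at he'
      have := hf a b he'
      rw [hG, SimpleGraph.fromEdgeSet_adj] at this
      simpa using this.1
  · intro H hH
    obtain ⟨e, he⟩ := hSH _ (mem_image_of_mem _ hH)
    obtain ⟨he1, he2⟩ := mem_inter.1 he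
    refine ⟨e, mem_inter.2 ⟨?_, he2⟩⟩
    rw [SimpleGraph.mem_edgeFinset, hG, SimpleGraph.edgeSet_fromEdgeSet]
    exact ⟨he1, H.not_isDiag_of_mem_edgeFinset he2⟩

/-! ### The 2-density -/

/-- `m₂(F)` is positive and is attained by a subgraph `J`. -/
lemma exists_densest {V : Type*} [Fintype V] (F : SimpleGraph V) (hF : ∃ v, 2 ≤ F.degree v) :
    0 < m2Dens F ∧ ∃ J : F.Subgraph, 3 ≤ J.verts.ncard ∧
      m2Dens F = ((J.edgeSet.ncard : ℝ) - 1) / ((J.verts.ncard : ℝ) - 2) := by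
  set A := {x : ℝ | ∃ J : F.Subgraph, 3 ≤ J.verts.ncard ∧
    x = ((J.edgeSet.ncard : ℝ) - 1) / ((J.verts.ncard : ℝ) - 2)} with hA
  have hfin : A.Finite := by
    refine (Set.finite_range (fun J : F.Subgraph =>
      ((J.edgeSet.ncard : ℝ) - 1) / ((J.verts.ncard : ℝ) - 2))).subset ?_
    rintro x ⟨J, -, rfl⟩
    exact ⟨J, rfl⟩
  obtain ⟨v, hv⟩ := hF
  have hV : 3 ≤ Fintype.card V := by
    have := F.degree_lt_card_verts v
    omega
  have hE : 2 ≤ F.edgeFinset.card := by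
    refine hv.trans ?_
    rw [← F.card_incidenceFinset_eq_degree]
    exact card_le_card (F.incidenceFinset_subset v)
  -- The subgraph `⊤` witnesses positivity.
  have hmem : ((F.edgeFinset.card : ℝ) - 1) / ((Fintype.card V : ℝ) - 2) ∈ A := by
    refine ⟨⊤, ?_, ?_⟩
    · simpa [Set.ncard_univ] using hV
    · rw [SimpleGraph.Subgraph.verts_top, SimpleGraph.Subgraph.edgeSet_top, Set.ncard_univ,
        Nat.card_eq_fintype_card, ← SimpleGraph.coe_edgeFinset, Set.ncard_coe_finset]
  have hpos : 0 < ((F.edgeFinset.card : ℝ) - 1) / ((Fintype.card V : ℝ) - 2) := by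
    have h1 : (3 : ℝ) ≤ Fintype.card V := by exact_mod_cast hV
    have h2 : (2 : ℝ) ≤ F.edgeFinset.card := by exact_mod_cast hE
    apply div_pos <;> linarith
  refine ⟨hpos.trans_le (le_csSup hfin.bddAbove hmem), ?_⟩
  exact Set.Nonempty.csSup_mem ⟨_, hmem⟩ hfin

lemma ncard_edgeSet_coe {V : Type*} {F : SimpleGraph V} (J : F.Subgraph) :
    J.coe.edgeSet.ncard = J.edgeSet.ncard := by
  rw [← SimpleGraph.Subgraph.image_coe_edgeSet_coe,
    Set.ncard_image_of_injective _ (Sym2.map.injective Subtype.val_injective)]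

theorem main_technical_lemma {V : Type*} [Fintype V] (F : SimpleGraph V)
    (hF : ∃ v, 2 ≤ F.degree v) :
    ∃ ε ∈ Set.Ioc (0 : ℝ) (1 / 2), ∃ δ ∈ Set.Ioc (0 : ℝ) (1 / 2),
      ∀ n : ℕ, 1 ≤ n → ∀ p : ℝ, 0 < p → p ≤ ε * (n : ℝ) ^ (-1 / m2Dens F) →
        ∀ 𝓗 : Finset (SimpleGraph (Fin n)),
          (∑ H ∈ 𝓗, Real.exp (-(δ * (H.edgeFinset.card : ℝ) * p))) ≤ 1 / 2 →
          ∃ G : SimpleGraph (Fin n), FFree F G ∧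
            ∀ H ∈ 𝓗, (G.edgeFinset ∩ H.edgeFinset).Nonempty := by
  obtain ⟨hm, J, hv, hJ⟩ := exists_densest F hF
  have hW : Fintype.card J.verts = J.verts.ncard := by
    rw [← Nat.card_eq_fintype_card, Nat.card_coe_set_eq]
  rw [← ncard_edgeSet_coe, ← hW] at hJ
  rw [← hW] at hv
  have hv' : (3 : ℝ) ≤ Fintype.card J.verts := by exact_mod_cast hv
  have hrm : (J.coe.edgeSet.ncard : ℝ) - 1 = m2Dens F * ((Fintype.card J.verts : ℝ) - 2) := by
    rw [hJ, div_mul_cancel₀]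
    linarith
  have hr : 2 ≤ J.coe.edgeSet.ncard := by
    have : (1 : ℝ) < J.coe.edgeSet.ncard := by
      have : 0 < m2Dens F * ((Fintype.card J.verts : ℝ) - 2) := mul_pos hm (by linarith)
      linarith
    exact_mod_cast this
  -- The smallness required by `exists_free_graph` with `η = ε`.
  set ε : ℝ := 1 / (8 * (Fintype.card J.verts : ℝ) ^ 2 * 4 ^ J.coe.edgeSet.ncard) with hε
  have hD : (2 : ℝ) ≤ 8 * (Fintype.card J.verts : ℝ) ^ 2 * 4 ^ J.coe.edgeSet.ncard := by
    have h1 : (1 : ℝ) ≤ (Fintype.card J.verts : ℝ) ^ 2 := one_le_pow₀ (by linarith)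
    have h2 : (1 : ℝ) ≤ 4 ^ J.coe.edgeSet.ncard := one_le_pow₀ (by norm_num)
    nlinarith
  have hε0 : 0 < ε := by positivity
  have hε1 : ε ≤ 1 / 2 := one_div_le_one_div_of_le (by norm_num) hD
  refine ⟨ε, ⟨hε0, hε1⟩, 1 / 4, by norm_num, ?_⟩
  intro n hn p hp0 hp 𝓗 hsum
  have hn' : (1 : ℝ) ≤ n := by exact_mod_cast hn
  have hn0 : (0 : ℝ) < n := by linarith
  have hp1 : p ≤ 1 := by
    have : (n : ℝ) ^ (-1 / m2Dens F) ≤ 1 :=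
      Real.rpow_le_one_of_one_le_of_nonpos hn' (div_nonpos_of_nonpos_of_nonneg (by norm_num) hm.le)
    nlinarith
  have hpn : (n : ℝ) ^ (Fintype.card J.verts - 2) * p ^ (J.coe.edgeSet.ncard - 1) ≤ ε := by
    have hx : ((n : ℝ) ^ (-1 / m2Dens F)) ^ (J.coe.edgeSet.ncard - 1)
        = ((n : ℝ) ^ (Fintype.card J.verts - 2))⁻¹ := by
      rw [← Real.rpow_natCast, ← Real.rpow_natCast, ← Real.rpow_mul hn0.le,
        ← Real.rpow_neg hn0.le, Nat.cast_sub (by omega), Nat.cast_sub (by omega)]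
      congr 1
      push_cast
      rw [hrm]
      field_simp
    calc (n : ℝ) ^ (Fintype.card J.verts - 2) * p ^ (J.coe.edgeSet.ncard - 1)
        ≤ (n : ℝ) ^ (Fintype.card J.verts - 2) *
          (ε * (n : ℝ) ^ (-1 / m2Dens F)) ^ (J.coe.edgeSet.ncard - 1) := by gcongr
      _ = ε ^ (J.coe.edgeSet.ncard - 1) := by
          rw [mul_pow, hx]
          field_simp
      _ ≤ ε := pow_le_of_le_one hε0.le (by linarith) (by omega)
  obtain ⟨G, hG, hGH⟩ := exists_free_graph J.coe (by omega) n p hp0 hp1 ε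
    (by rw [hε, mul_one_div_cancel (by linarith)]) hpn 𝓗 hsum
  refine ⟨G, ?_, hGH⟩
  rintro ⟨f, hf⟩
  exact hG ⟨(Function.Embedding.subtype _).trans f, fun a b hab => hf _ _ (J.adj_sub hab)⟩
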